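/- The complex vector space of functions from 2×2 complex matrices to ℂ spanned by the five functions x ↦ Tr(x³), x ↦ Tr(x²·xᵀ), x ↦ Tr(x²)·Tr(x), x ↦ Tr(x·xᵀ)·Tr(x), x ↦ Tr(x)³ has dimension 3. -/

import Mathlib

open Matrix

/-!
By Cayley–Hamilton, `2 Tr(x²y) = 2 Tr(xy) Tr(x) + (Tr(x²) - Tr(x)²) Tr(y)` for 2×2 matrices.
Taking `y = x` and `y = xᵀ` expresses the doubles of `Tr(x³)` and `Tr(x²xᵀ)` through the other
three functions. These are independent because at the trace-one matrices `!![1, b; c, 0]` they take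
the values `1 + 2bc`, `1 + b² + c²` and `1`. Multiplication by a nonzerodivisor does not change the
rank of a submodule, so there is no need to divide by `2`.
-/

section Span

variable {R M : Type*} [CommRing R] [AddCommGroup M] [Module R M]

theorem finrank_eq_of_le_of_smul_mem {c : R} (hc : IsSMulRegular M c) {N P : Submodule R M}
    (hle : N ≤ P) (hsmul : ∀ m ∈ P, c • m ∈ N) :
    Module.finrank R N = Module.finrank R P := by
  let f : P →ₗ[R] N := (LinearMap.lsmul R M c).restrict hsmul
  have hf : Function.Injective f := fun a b hab => Subtype.ext (hc (congrArg Subtype.val hab))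
  exact congrArg Cardinal.toNat
    ((Submodule.rank_mono hle).antisymm (LinearMap.rank_le_of_injective f hf))

theorem finrank_span_eq_of_subset_of_smul_mem_span {c : R} (hc : IsSMulRegular M c) {s t : Set M}
    (hst : s ⊆ t) (hsmul : ∀ m ∈ t, c • m ∈ Submodule.span R s) :
    Module.finrank R (Submodule.span R s) = Module.finrank R (Submodule.span R t) :=
  finrank_eq_of_le_of_smul_mem hc (Submodule.span_mono hst) fun _ hm =>
    (Submodule.span_le (p := (Submodule.span R s).comap (LinearMap.lsmul R M c))).2 hsmul hm

end Span

section TraceIdentities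

variable {n R : Type*} [Fintype n] [CommRing R]

theorem mul_self_of_card_eq_two [DecidableEq n] (hn : Fintype.card n = 2) (x : Matrix n n R) :
    x * x = x.trace • x - x.det • 1 := by
  nontriviality R
  have h := x.aeval_self_charpoly
  simp only [x.charpoly_of_card_eq_two hn, map_add, map_sub, map_mul, map_pow,
    Polynomial.aeval_X, Polynomial.aeval_C, Algebra.algebraMap_eq_smul_one, smul_one_mul] at h
  rw [← sq, ← sub_eq_zero, ← h]
  abel

theorem trace_mul_self_mul_of_card_eq_two [DecidableEq n] (hn : Fintype.card n = 2)
    (x y : Matrix n n R) :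
    (x * x * y).trace = x.trace * (x * y).trace - x.det * y.trace := by
  simp only [mul_self_of_card_eq_two hn, sub_mul, smul_mul_assoc, one_mul,
    trace_sub, trace_smul, smul_eq_mul]

theorem trace_mul_self_of_card_eq_two [DecidableEq n] (hn : Fintype.card n = 2) (x : Matrix n n R) :
    (x * x).trace = x.trace ^ 2 - 2 * x.det := by
  have h := trace_mul_self_mul_of_card_eq_two hn x 1
  rw [mul_one, mul_one, trace_one, hn] at h
  linear_combination h

theorem two_mul_trace_mul_self_mul_of_card_eq_two (hn : Fintype.card n = 2) (x y : Matrix n n R) :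
    2 * (x * x * y).trace =
      2 * ((x * y).trace * x.trace) + ((x * x).trace - x.trace ^ 2) * y.trace := by
  classical
  rw [trace_mul_self_mul_of_card_eq_two hn, trace_mul_self_of_card_eq_two hn]
  ring

theorem two_mul_trace_mul_self_mul_self_of_card_eq_two (hn : Fintype.card n = 2)
    (x : Matrix n n R) :
    2 * (x * x * x).trace = 3 * ((x * x).trace * x.trace) - x.trace ^ 3 := by
  rw [two_mul_trace_mul_self_mul_of_card_eq_two hn]
  ring

theorem two_mul_trace_mul_self_mul_transpose_of_card_eq_two (hn : Fintype.card n = 2)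
    (x : Matrix n n R) :
    2 * (x * x * xᵀ).trace =
      2 * ((x * xᵀ).trace * x.trace) + (x * x).trace * x.trace - x.trace ^ 3 := by
  rw [two_mul_trace_mul_self_mul_of_card_eq_two hn, trace_transpose]
  ring

end TraceIdentities

section Invariants

variable {R : Type*} [CommRing R]

variable (R) in
/-- The three of the five cubic invariants that are products of invariants of lower degree; the
other two are combinations of them once `2` is inverted. -/
def decomposableCubicInvariants : Fin 3 → Matrix (Fin 2) (Fin 2) R → R :=
  ![fun x => (x * x).trace * x.trace,
    fun x => (x * xᵀ).trace * x.trace,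
    fun x => x.trace ^ 3]

theorem range_decomposableCubicInvariants :
    Set.range (decomposableCubicInvariants R) =
      {fun x => (x * x).trace * x.trace,
        fun x => (x * xᵀ).trace * x.trace,
        fun x => x.trace ^ 3} := by
  simp only [decomposableCubicInvariants, range_cons, range_empty, Set.union_empty,
    Set.singleton_union]

theorem sum_smul_decomposableCubicInvariants_apply (g : Fin 3 → R) (b c : R) :
    (∑ i, g i • decomposableCubicInvariants R i) !![1, b; c, 0] =
      g 0 * (1 + 2 * b * c) + g 1 * (1 + b ^ 2 + c ^ 2) + g 2 := by
  simp only [decomposableCubicInvariants, trace_fin_two, mul_apply, Fin.sum_univ_two,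
    Fin.sum_univ_three, transpose_apply, Pi.add_apply, Pi.smul_apply, smul_eq_mul, of_apply,
    cons_val', cons_val, cons_val_zero, cons_val_one, cons_val_fin_one]
  ring

theorem linearIndependent_decomposableCubicInvariants (h2 : IsSMulRegular R (2 : R)) :
    LinearIndependent R (decomposableCubicInvariants R) := by
  rw [Fintype.linearIndependent_iff]
  intro g hg
  have eval_eq_zero (b c : R) :
      g 0 * (1 + 2 * b * c) + g 1 * (1 + b ^ 2 + c ^ 2) + g 2 = 0 := by
    rw [← sum_smul_decomposableCubicInvariants_apply, hg, Pi.zero_apply]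
  have hg1 : g 1 = 0 := by linear_combination eval_eq_zero 1 0 - eval_eq_zero 0 0
  have hg0 : g 0 = 0 := h2.right_eq_zero_of_smul <| by
    linear_combination eval_eq_zero 1 1 - eval_eq_zero 0 0 - 2 * hg1
  have hg2 : g 2 = 0 := by linear_combination eval_eq_zero 0 0 - hg0 - hg1
  exact Fin.forall_fin_succ.2 ⟨hg0, Fin.forall_fin_two.2 ⟨hg1, hg2⟩⟩

theorem two_smul_trace_mul_self_mul_self_mem_span :
    (2 : R) • (fun x : Matrix (Fin 2) (Fin 2) R => (x * x * x).trace) ∈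
      Submodule.span R (Set.range (decomposableCubicInvariants R)) := by
  have relation : (2 : R) • (fun x : Matrix (Fin 2) (Fin 2) R => (x * x * x).trace) =
      (3 : R) • decomposableCubicInvariants R 0 - decomposableCubicInvariants R 2 :=
    funext (two_mul_trace_mul_self_mul_self_of_card_eq_two (Fintype.card_fin 2))
  rw [relation]
  exact sub_mem (Submodule.smul_mem _ _ (Submodule.subset_span ⟨0, rfl⟩))
    (Submodule.subset_span ⟨2, rfl⟩)

theorem two_smul_trace_mul_self_mul_transpose_mem_span :
    (2 : R) • (fun x : Matrix (Fin 2) (Fin 2) R => (x * x * xᵀ).trace) ∈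
      Submodule.span R (Set.range (decomposableCubicInvariants R)) := by
  have relation : (2 : R) • (fun x : Matrix (Fin 2) (Fin 2) R => (x * x * xᵀ).trace) =
      (2 : R) • decomposableCubicInvariants R 1 + decomposableCubicInvariants R 0 -
        decomposableCubicInvariants R 2 :=
    funext (two_mul_trace_mul_self_mul_transpose_of_card_eq_two (Fintype.card_fin 2))
  rw [relation]
  exact sub_mem
    (add_mem (Submodule.smul_mem _ _ (Submodule.subset_span ⟨1, rfl⟩))
      (Submodule.subset_span ⟨0, rfl⟩))
    (Submodule.subset_span ⟨2, rfl⟩)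

theorem finrank_span_invariants_general [Nontrivial R] (h2 : IsSMulRegular R (2 : R)) :
    Module.finrank R (Submodule.span R
      ({(fun x => (x * x * x).trace),
        (fun x => (x * x * xᵀ).trace),
        (fun x => (x * x).trace * x.trace),
        (fun x => (x * xᵀ).trace * x.trace),
        (fun x => x.trace ^ 3)} : Set (Matrix (Fin 2) (Fin 2) R → R))) = 3 := by
  rw [← range_decomposableCubicInvariants,
    ← finrank_span_eq_of_subset_of_smul_mem_span (IsSMulRegular.pi fun _ => h2)
      ((Set.subset_insert _ _).trans (Set.subset_insert _ _)),
    finrank_span_eq_card (linearIndependent_decomposableCubicInvariants h2), Fintype.card_fin]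
  rintro f (rfl | rfl | hf)
  · exact two_smul_trace_mul_self_mul_self_mem_span
  · exact two_smul_trace_mul_self_mul_transpose_mem_span
  · exact Submodule.smul_mem _ _ (Submodule.subset_span hf)

end Invariants

/-- The span of the five functions `x ↦ Tr(x³)`, `x ↦ Tr(x²·xᵀ)`, `x ↦ Tr(x²)·Tr(x)`,
`x ↦ Tr(x·xᵀ)·Tr(x)`, `x ↦ Tr(x)³` on 2×2 complex matrices has dimension 3. -/
theorem finrank_span_invariants :
    Module.finrank ℂ (Submodule.span ℂ
      ({(fun x => (x * x * x).trace),
        (fun x => (x * x * xᵀ).trace),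
        (fun x => (x * x).trace * x.trace),
        (fun x => (x * xᵀ).trace * x.trace),
        (fun x => x.trace ^ 3)} : Set (Matrix (Fin 2) (Fin 2) ℂ → ℂ))) = 3 :=
  finrank_span_invariants_general (IsSMulRegular.of_ne_zero two_ne_zero)
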